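/- arXiv:1406.0157 — 2 statements merged into one kernel-verified Lean document; each statement's English description precedes it below -/
import Mathlib

section
/- Let a, b be real numbers with 0 < a ≤ b and a² ≥ a + b, let f(x) = binom(a,x)·binom(b,x) for x ∈ [0,a], and let t = (ab − 1)/(a + b + 2). Then f attains its maximum on [0, a], and every maximizer x* of f on [0, a] satisfies t ≤ x* ≤ t + 1; in particular |x* − (ab − 1)/(a + b + 2)| ≤ 1. -/
/-- Binomial coefficient extended to real arguments via the Gamma function. -/
noncomputable def rbinom (a x : ℝ) : ℝ :=
  Real.Gamma (a + 1) / (Real.Gamma (x + 1) * Real.Gamma (a - x + 1))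

/-!
Consecutive values of `f` have ratio `f (y + 1) / f y = (a - y) (b - y) / (y + 1) ^ 2`, and
`(a - y) (b - y) - (y + 1) ^ 2 = (a + b + 2) (t - y)`. Hence a unit step to the right increases `f`
exactly when `y < t`. A unit step from a point of `[0, a]` may leave `[0, a]`, but it stays inside
`(-1, a + 1)`, where `f` is positive and, because `log Γ` is convex, log-concave. A local maximum of
a log-concave function is global, so a maximizer `x` on `[0, a]` can be compared with `x + 1` when
`x < t < a` and with `x - 1` when `x > t + 1 > 0`.
-/

open Real Set Filter

section LogConcave

theorem isMaxOn_of_isLocalMaxOn_of_concaveOn_log {E : Type*} [AddCommGroup E] [TopologicalSpace E]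
    [Module ℝ E] [IsTopologicalAddGroup E] [ContinuousSMul ℝ E] {s : Set E} {f : E → ℝ} {x : E}
    (hpos : ∀ z ∈ s, 0 < f z) (hf : ConcaveOn ℝ s fun z ↦ log (f z)) (hx : x ∈ s)
    (hmax : IsLocalMaxOn f s x) : IsMaxOn f s x := by
  have hlog : IsLocalMaxOn (fun z ↦ log (f z)) s x := by
    filter_upwards [hmax, self_mem_nhdsWithin] with z hz hzs
    exact log_le_log (hpos z hzs) hz
  intro y hy
  exact (log_le_log_iff (hpos y hy) (hpos x hx)).1
    (IsMaxOn.of_isLocalMaxOn_of_concaveOn hx hlog hf hy)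

variable {s : Set ℝ} {f : ℝ → ℝ} {c x y : ℝ}

theorem le_of_isMaxOn_Icc_left_of_concaveOn_log (hpos : ∀ z ∈ s, 0 < f z)
    (hf : ConcaveOn ℝ s fun z ↦ log (f z)) (hx : x ∈ s) (hxc : x < c)
    (hmax : IsMaxOn f (Icc x c) x) (hy : y ∈ s) (hxy : x ≤ y) : f y ≤ f x := by
  have hlocal : IsLocalMaxOn f (s ∩ Ici x) x :=
    hmax.filter_mono <| le_principal_iff.2 <|
      nhdsWithin_mono x inter_subset_right (Icc_mem_nhdsGE hxc)
  exact isMaxOn_of_isLocalMaxOn_of_concaveOn_log (fun z hz ↦ hpos z hz.1)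
    (hf.subset inter_subset_left (hf.1.inter (convex_Ici x))) ⟨hx, self_mem_Ici⟩ hlocal ⟨hy, hxy⟩

theorem le_of_isMaxOn_Icc_right_of_concaveOn_log (hpos : ∀ z ∈ s, 0 < f z)
    (hf : ConcaveOn ℝ s fun z ↦ log (f z)) (hx : x ∈ s) (hcx : c < x)
    (hmax : IsMaxOn f (Icc c x) x) (hy : y ∈ s) (hyx : y ≤ x) : f y ≤ f x := by
  have hlocal : IsLocalMaxOn f (s ∩ Iic x) x :=
    hmax.filter_mono <| le_principal_iff.2 <|
      nhdsWithin_mono x inter_subset_right (Icc_mem_nhdsLE hcx)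
  exact isMaxOn_of_isLocalMaxOn_of_concaveOn_log (fun z hz ↦ hpos z hz.1)
    (hf.subset inter_subset_left (hf.1.inter (convex_Iic x))) ⟨hx, self_mem_Iic⟩ hlocal ⟨hy, hyx⟩

end LogConcave

section Rbinom

variable {a b x : ℝ}

theorem rbinom_pos (ha : -1 < a) (hx : x ∈ Ioo (-1) (a + 1)) : 0 < rbinom a x :=
  div_pos (Gamma_pos_of_pos (by linarith)) <|
    mul_pos (Gamma_pos_of_pos (by linarith [hx.1])) (Gamma_pos_of_pos (by linarith [hx.2]))

theorem continuousOn_rbinom (a : ℝ) : ContinuousOn (rbinom a) (Ioo (-1) (a + 1)) := by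
  have hGamma := differentiableOn_Gamma_Ioi.continuousOn
  have hleft : ContinuousOn (fun x ↦ Gamma (x + 1)) (Ioo (-1) (a + 1)) :=
    hGamma.comp (by fun_prop) fun x hx ↦ mem_Ioi.2 (by linarith [hx.1])
  have hright : ContinuousOn (fun x ↦ Gamma (a - x + 1)) (Ioo (-1) (a + 1)) :=
    hGamma.comp (by fun_prop) fun x hx ↦ mem_Ioi.2 (by linarith [hx.2])
  exact continuousOn_const.div (hleft.mul hright) fun x hx ↦
    (mul_pos (Gamma_pos_of_pos (by linarith [hx.1])) (Gamma_pos_of_pos (by linarith [hx.2]))).ne'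

theorem concaveOn_log_rbinom (ha : -1 < a) :
    ConcaveOn ℝ (Ioo (-1) (a + 1)) fun x ↦ log (rbinom a x) := by
  have hleft : ConvexOn ℝ (Ioo (-1) (a + 1)) fun x ↦ log (Gamma (x + 1)) :=
    (convexOn_log_Gamma.comp_affineMap (AffineMap.id ℝ ℝ + AffineMap.const ℝ ℝ 1)).subset
      (fun x hx ↦ by simpa using by linarith [hx.1]) (convex_Ioo _ _)
  have hright : ConvexOn ℝ (Ioo (-1) (a + 1)) fun x ↦ log (Gamma (a - x + 1)) :=
    (convexOn_log_Gamma.comp_affineMap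
      (AffineMap.const ℝ ℝ a - AffineMap.id ℝ ℝ + AffineMap.const ℝ ℝ 1)).subset
      (fun x hx ↦ by simpa using by linarith [hx.2]) (convex_Ioo _ _)
  refine ((concaveOn_const (log (Gamma (a + 1))) (convex_Ioo _ _)).sub (hleft.add hright)).congr ?_
  intro x hx
  have hGa : Gamma (a + 1) ≠ 0 := (Gamma_pos_of_pos (by linarith)).ne'
  have hGx : Gamma (x + 1) ≠ 0 := (Gamma_pos_of_pos (by linarith [hx.1])).ne'
  have hGax : Gamma (a - x + 1) ≠ 0 := (Gamma_pos_of_pos (by linarith [hx.2])).ne'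
  simp only [rbinom, Pi.sub_apply, Pi.add_apply, log_div hGa (mul_ne_zero hGx hGax),
    log_mul hGx hGax]

theorem rbinom_add_one (hx : x + 1 ≠ 0) (hxa : a - x ≠ 0) :
    rbinom a (x + 1) = rbinom a x * ((a - x) / (x + 1)) := by
  rw [rbinom, rbinom, Gamma_add_one hx, show a - (x + 1) + 1 = a - x by ring, Gamma_add_one hxa]
  field_simp

theorem rbinom_mul_rbinom_pos (ha : -1 < a) (hab : a ≤ b) (hx : x ∈ Ioo (-1) (a + 1)) :
    0 < rbinom a x * rbinom b x :=
  mul_pos (rbinom_pos ha hx) (rbinom_pos (ha.trans_le hab) ⟨hx.1, by linarith [hx.2]⟩)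

theorem continuousOn_rbinom_mul_rbinom (hab : a ≤ b) :
    ContinuousOn (fun x ↦ rbinom a x * rbinom b x) (Ioo (-1) (a + 1)) :=
  (continuousOn_rbinom a).mul ((continuousOn_rbinom b).mono (Ioo_subset_Ioo_right (by linarith)))

theorem concaveOn_log_rbinom_mul_rbinom (ha : -1 < a) (hab : a ≤ b) :
    ConcaveOn ℝ (Ioo (-1) (a + 1)) fun x ↦ log (rbinom a x * rbinom b x) := by
  have hsub : Ioo (-1) (a + 1) ⊆ Ioo (-1) (b + 1) := Ioo_subset_Ioo_right (by linarith)
  have hb : -1 < b := ha.trans_le hab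
  refine ((concaveOn_log_rbinom ha).add
    ((concaveOn_log_rbinom hb).subset hsub (convex_Ioo _ _))).congr fun x hx ↦ ?_
  exact (log_mul (rbinom_pos ha hx).ne' (rbinom_pos hb (hsub hx)).ne').symm

theorem rbinom_mul_rbinom_add_one (hx : x + 1 ≠ 0) (hxa : a - x ≠ 0) (hxb : b - x ≠ 0) :
    rbinom a (x + 1) * rbinom b (x + 1) =
      rbinom a x * rbinom b x * ((a - x) * (b - x) / (x + 1) ^ 2) := by
  rw [rbinom_add_one hx hxa, rbinom_add_one hx hxb]
  field_simp

theorem rbinom_mul_rbinom_lt_add_one (hab : a ≤ b) (hx : -1 < x) (hxa : x < a)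
    (hxt : x < (a * b - 1) / (a + b + 2)) :
    rbinom a x * rbinom b x < rbinom a (x + 1) * rbinom b (x + 1) := by
  have hratio : 1 < (a - x) * (b - x) / (x + 1) ^ 2 := by
    rw [lt_div_iff₀ (by linarith)] at hxt
    rw [one_lt_div (pow_pos (by linarith) 2)]
    linarith
  rw [rbinom_mul_rbinom_add_one (by linarith) (by linarith) (by linarith)]
  exact lt_mul_of_one_lt_right
    (rbinom_mul_rbinom_pos (hx.trans hxa) hab ⟨hx, by linarith⟩) hratio

theorem rbinom_mul_rbinom_add_one_lt (hab : a ≤ b) (hx : -1 < x) (hxa : x < a)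
    (htx : (a * b - 1) / (a + b + 2) < x) :
    rbinom a (x + 1) * rbinom b (x + 1) < rbinom a x * rbinom b x := by
  have hratio : (a - x) * (b - x) / (x + 1) ^ 2 < 1 := by
    rw [div_lt_iff₀ (by linarith)] at htx
    rw [div_lt_one (pow_pos (by linarith) 2)]
    linarith
  rw [rbinom_mul_rbinom_add_one (by linarith) (by linarith) (by linarith)]
  exact mul_lt_of_lt_one_right
    (rbinom_mul_rbinom_pos (hx.trans hxa) hab ⟨hx, by linarith⟩) hratio

theorem neg_one_lt_mul_sub_one_div (ha : -1 < a) (hb : -1 < b) :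
    -1 < (a * b - 1) / (a + b + 2) := by
  rw [lt_div_iff₀ (by linarith)]
  linarith [mul_pos (neg_lt_iff_pos_add.1 ha) (neg_lt_iff_pos_add.1 hb)]

theorem mul_sub_one_div_lt (ha : -1 < a) (hb : -1 < b) : (a * b - 1) / (a + b + 2) < a := by
  rw [div_lt_iff₀ (by linarith)]
  linarith [pow_pos (neg_lt_iff_pos_add.1 ha) 2]

theorem exists_isMaxOn_rbinom_mul_rbinom (ha : 0 ≤ a) (hab : a ≤ b) :
    ∃ x ∈ Icc 0 a, IsMaxOn (fun x ↦ rbinom a x * rbinom b x) (Icc 0 a) x :=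
  isCompact_Icc.exists_isMaxOn (nonempty_Icc.2 ha) <|
    (continuousOn_rbinom_mul_rbinom hab).mono (Icc_subset_Ioo (by norm_num) (by linarith))

theorem le_of_isMaxOn_rbinom_mul_rbinom (hab : a ≤ b) (hx : x ∈ Icc 0 a)
    (hmax : IsMaxOn (fun x ↦ rbinom a x * rbinom b x) (Icc 0 a) x) :
    (a * b - 1) / (a + b + 2) ≤ x := by
  obtain ⟨hx0, hxa⟩ := hx
  have ha : -1 < a := by linarith
  by_contra! hxt
  have hxa' : x < a := hxt.trans (mul_sub_one_div_lt ha (ha.trans_le hab))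
  have hle := le_of_isMaxOn_Icc_left_of_concaveOn_log (y := x + 1)
    (fun z hz ↦ rbinom_mul_rbinom_pos ha hab hz) (concaveOn_log_rbinom_mul_rbinom ha hab)
    ⟨by linarith, by linarith⟩ hxa' (hmax.on_subset (Icc_subset_Icc_left hx0))
    ⟨by linarith, by linarith⟩ (by linarith)
  exact hle.not_gt (rbinom_mul_rbinom_lt_add_one hab (by linarith) hxa' hxt)

theorem le_add_one_of_isMaxOn_rbinom_mul_rbinom (hab : a ≤ b) (hx : x ∈ Icc 0 a)
    (hmax : IsMaxOn (fun x ↦ rbinom a x * rbinom b x) (Icc 0 a) x) :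
    x ≤ (a * b - 1) / (a + b + 2) + 1 := by
  obtain ⟨hx0, hxa⟩ := hx
  have ha : -1 < a := by linarith
  have ht := neg_one_lt_mul_sub_one_div ha (ha.trans_le hab)
  by_contra! htx
  have hle := le_of_isMaxOn_Icc_right_of_concaveOn_log (c := 0) (y := x - 1)
    (fun z hz ↦ rbinom_mul_rbinom_pos ha hab hz) (concaveOn_log_rbinom_mul_rbinom ha hab)
    ⟨by linarith, by linarith⟩ (by linarith) (hmax.on_subset (Icc_subset_Icc_right hxa))
    ⟨by linarith, by linarith⟩ (by linarith)
  have hlt := rbinom_mul_rbinom_add_one_lt (x := x - 1) hab (by linarith) (by linarith)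
    (by linarith)
  rw [sub_add_cancel] at hlt
  exact hle.not_gt hlt

end Rbinom

theorem stmt12_general (a b : ℝ) (ha : 0 ≤ a) (hab : a ≤ b)
    (f : ℝ → ℝ) (hf : ∀ x, f x = rbinom a x * rbinom b x)
    (t : ℝ) (ht : t = (a * b - 1) / (a + b + 2)) :
    (∃ x ∈ Set.Icc (0 : ℝ) a, ∀ y ∈ Set.Icc (0 : ℝ) a, f y ≤ f x) ∧
    (∀ x ∈ Set.Icc (0 : ℝ) a, (∀ y ∈ Set.Icc (0 : ℝ) a, f y ≤ f x) →
      t ≤ x ∧ x ≤ t + 1 ∧ |x - (a * b - 1) / (a + b + 2)| ≤ 1) := by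
  obtain rfl : f = fun x ↦ rbinom a x * rbinom b x := funext hf
  subst ht
  refine ⟨exists_isMaxOn_rbinom_mul_rbinom ha hab, fun x hx hmax ↦ ?_⟩
  have hlower := le_of_isMaxOn_rbinom_mul_rbinom hab hx hmax
  have hupper := le_add_one_of_isMaxOn_rbinom_mul_rbinom hab hx hmax
  exact ⟨hlower, hupper, abs_le.2 ⟨by linarith, by linarith⟩⟩

theorem stmt12 (a b : ℝ) (ha : 0 < a) (hab : a ≤ b) (hsq : a + b ≤ a ^ 2)
    (f : ℝ → ℝ) (hf : ∀ x, f x = rbinom a x * rbinom b x)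
    (t : ℝ) (ht : t = (a * b - 1) / (a + b + 2)) :
    (∃ x ∈ Set.Icc (0 : ℝ) a, ∀ y ∈ Set.Icc (0 : ℝ) a, f y ≤ f x) ∧
    (∀ x ∈ Set.Icc (0 : ℝ) a, (∀ y ∈ Set.Icc (0 : ℝ) a, f y ≤ f x) →
      t ≤ x ∧ x ≤ t + 1 ∧ |x - (a * b - 1) / (a + b + 2)| ≤ 1) :=
  stmt12_general a b ha.le hab f hf t ht
end

section
/- (Extension of Poltyrev's bound.) Fix reals p ∈ (0, 1/2), δ > 0, and τ ∈ [0, 1]. There exists a constant α > 0 such that the following holds for every n ≥ 1 and every natural number k with k/n < 1 − H(p) − δ: if C ⊆ (ZMod 2)^n is a linear subspace whose weight distribution w_i = |{c ∈ C : wt(c) = i}| satisfies w_i ≤ 2^{(δ/3)·n} · C(n,i) · 2^{k−n} for every i ≥ τ·n, then the BSC(p)-probability of the set {η ∈ (ZMod 2)^n : ∃ c ∈ C with wt(c) ≥ τ·n and dist(η, c) ≤ wt(η)} is at most 2^{−α·n}. -/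
/-! Gallager's form of the union bound. Let `M` bound the ratio between the weight distribution of
the code and that of the whole space. A vector of weight `w` is confusable with a codeword `c` if it
lies within distance `w` of `c`. The number of such vectors depends only on the weight of `c`, since
coordinate permutations preserve distances; so summing it over the code costs at most `M` times
summing it over the whole space, and the latter sum is the number of vectors of weight `w` times the
size of the Hamming ball of radius `w`. As `p ≤ 1 / 2`, each element of that ball has probability at
least `P w := p ^ w * (1 - p) ^ (n - w)`, so the ball has at most `1 / P w` elements.

Hence the fraction of confusable vectors among those of weight `w` is at most
`min 1 (M / P w) ≤ (M / P w) ^ s` for every `s ∈ [0, 1]`, and the binomial theorem bounds the error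
probability by `M ^ s * (p ^ (1 - s) + (1 - p) ^ (1 - s)) ^ n`. For `M = 2 ^ (-ρ * n)` this is the
`n`-th power of a function of `s` that has value `1` and derivative `(H(p) - ρ) * log 2` at `s = 0`.
If `H(p) < ρ`, its value at some small `s > 0` is therefore less than `1`. -/

open Finset

/-- Hamming weight of a binary vector. -/
def wt {n : ℕ} (x : Fin n → ZMod 2) : ℕ := (Finset.univ.filter fun j => x j = 1).card

/-- Probability, over a vector of n i.i.d. Bernoulli(p) bits, of a set of binary vectors. -/
noncomputable def bscProb {n : ℕ} (p : ℝ) (E : Finset (Fin n → ZMod 2)) : ℝ :=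
  ∑ η ∈ E, p ^ wt η * (1 - p) ^ (n - wt η)

/-- Binary entropy function (base-2 logarithms). -/
noncomputable def binH (p : ℝ) : ℝ := -p * Real.logb 2 p - (1 - p) * Real.logb 2 (1 - p)

lemma sum_le_mul_sum_of_card_fiber_le {α β R : Type*} [Fintype α] [DecidableEq β]
    [Semiring R] [PartialOrder R] [IsOrderedRing R] {s : Finset α} {g : α → β} {f : α → R}
    {M : R} (hf : ∀ a, 0 ≤ f a) (hfg : ∀ a b, g a = g b → f a = f b)
    (hs : ∀ b, (#{a ∈ s | g a = b} : R) ≤ M * #{a | g a = b}) :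
    ∑ a ∈ s, f a ≤ M * ∑ a, f a := by
  have sum_fiber (t : Finset α) (a : α) :
      ∑ x ∈ t with g x = g a, f x = #{x ∈ t | g x = g a} * f a := by
    rw [sum_congr rfl fun x hx => hfg x a (mem_filter.mp hx).2, sum_const, nsmul_eq_mul]
  have sum_fiberwise (t : Finset α) :
      ∑ b ∈ univ.image g, ∑ x ∈ t with g x = b, f x = ∑ x ∈ t, f x :=
    sum_fiberwise_of_maps_to (fun a _ => mem_image_of_mem g (mem_univ a)) f
  rw [← sum_fiberwise s, ← sum_fiberwise univ, mul_sum]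
  refine sum_le_sum fun b hb => ?_
  obtain ⟨a, -, rfl⟩ := mem_image.mp hb
  rw [sum_fiber, sum_fiber, ← mul_assoc]
  exact mul_le_mul_of_nonneg_right (hs _) (hf a)

lemma pow_mul_pow_sub_le_of_le {R : Type*} [Semiring R] [PartialOrder R] [IsOrderedRing R] {a b : R}
    (ha : 0 ≤ a) (hab : a ≤ b) {i j n : ℕ} (hij : i ≤ j) (hjn : j ≤ n) :
    a ^ j * b ^ (n - j) ≤ a ^ i * b ^ (n - i) := by
  have hb : 0 ≤ b := ha.trans hab
  calc a ^ j * b ^ (n - j) = a ^ i * (a ^ (j - i) * b ^ (n - j)) := by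
        rw [← mul_assoc, ← pow_add, Nat.add_sub_cancel' hij]
    _ ≤ a ^ i * (b ^ (j - i) * b ^ (n - j)) := by gcongr
    _ = a ^ i * b ^ (n - i) := by rw [← pow_add]; congr 2; omega

lemma min_one_le_rpow {x s : ℝ} (hx : 0 ≤ x) (hs0 : 0 ≤ s) (hs1 : s ≤ 1) : min 1 x ≤ x ^ s := by
  rcases le_total x 1 with h | h
  · exact (min_le_right 1 x).trans (Real.self_le_rpow_of_le_one hx h hs1)
  · exact (min_le_left 1 x).trans (Real.one_le_rpow h hs0)

lemma rpow_mul_le_of_mul_le_one {x y s : ℝ} (hx : 0 ≤ x) (hy : 0 < y) (hxy : x * y ≤ 1)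
    (hs : 0 ≤ s) : x ^ s * y ≤ y ^ (1 - s) :=
  calc x ^ s * y = (x * y) ^ s * y ^ (1 - s) := by
        rw [Real.mul_rpow hx hy.le, mul_assoc, ← Real.rpow_add hy, add_sub_cancel, Real.rpow_one]
    _ ≤ y ^ (1 - s) :=
        mul_le_of_le_one_left (by positivity) (Real.rpow_le_one (by positivity) hxy hs)

lemma exists_mem_Ioo_lt_of_hasDerivAt_neg {f : ℝ → ℝ} {f' a b : ℝ} (hf : HasDerivAt f f' a)
    (hf' : f' < 0) (hab : a < b) : ∃ x ∈ Set.Ioo a b, f x < f a := by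
  have hslope := hf.hasDerivWithinAt.limsup_slope_le' (s := Set.Ioi a) Set.self_notMem_Ioi hf'
  obtain ⟨x, hx_slope, hx⟩ := (hslope.and (Ioo_mem_nhdsGT hab)).exists
  exact ⟨x, hx, (slope_neg_iff_of_le hx.1.le).mp hx_slope⟩

section Weight

variable {n : ℕ}

/-- A binary vector corresponds to its support, the set of coordinates equal to `1`; the Hamming
weight is the cardinality of the support. -/
def supportEquiv (n : ℕ) : (Fin n → ZMod 2) ≃ Finset (Fin n) where
  toFun x := {j | x j = 1}
  invFun s j := if j ∈ s then 1 else 0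
  left_inv x := by
    have ite_eq_one (a : ZMod 2) : (if a = 1 then 1 else 0) = a := by decide +revert
    funext j
    simpa only [mem_filter, mem_univ, true_and] using ite_eq_one (x j)
  right_inv s := by ext j; simp

lemma wt_le (x : Fin n → ZMod 2) : wt x ≤ n :=
  card_finset_fin_le (supportEquiv n x)

lemma card_filter_wt_eq (n i : ℕ) : #{x : Fin n → ZMod 2 | wt x = i} = n.choose i := by
  have h : #{x : Fin n → ZMod 2 | wt x = i} = #(powersetCard i (univ : Finset (Fin n))) :=
    card_equiv (supportEquiv n) fun x => by simp only [mem_filter_univ, mem_powersetCard_univ]; rfl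
  rw [h, card_powersetCard, card_univ, Fintype.card_fin]

lemma nonneg_of_card_wt_eq_le {S : Finset (Fin n → ZMod 2)} {M : ℝ}
    (hS : ∀ i, (#{c ∈ S | wt c = i} : ℝ) ≤ M * n.choose i) : 0 ≤ M := by
  simpa only [Nat.choose_zero_right, Nat.cast_one, mul_one] using (Nat.cast_nonneg _).trans (hS 0)

lemma sum_pow_wt_mul_pow {R : Type*} [CommSemiring R] (n : ℕ) (a b : R) :
    ∑ x : Fin n → ZMod 2, a ^ wt x * b ^ (n - wt x) = (a + b) ^ n := by
  rw [← Fin.sum_pow_mul_eq_add_pow, ← (supportEquiv n).sum_comp]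
  rfl

lemma wt_comp_perm (x : Fin n → ZMod 2) (σ : Equiv.Perm (Fin n)) : wt (x ∘ σ) = wt x :=
  card_equiv σ fun j => by simp

lemma exists_comp_perm_eq_of_wt_eq {c d : Fin n → ZMod 2} (h : wt c = wt d) :
    ∃ σ : Equiv.Perm (Fin n), d ∘ σ = c := by
  have hcard : Fintype.card {j // c j = 1} = Fintype.card {j // d j = 1} := by
    simpa only [wt, Fintype.card_subtype] using h
  let e := Fintype.equivOfCardEq hcard
  refine ⟨e.extendSubtype, (supportEquiv n).injective (filter_congr fun j _ => ?_)⟩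
  exact ⟨not_imp_not.mp (e.extendSubtype_not_mem j), e.extendSubtype_mem j⟩

end Weight

section Confusion

variable {n : ℕ}

/-- The Hamming ball of radius `w` around `0` in `(ZMod 2)^n`. -/
def wtBall (n w : ℕ) : Finset (Fin n → ZMod 2) := {x | wt x ≤ w}

/-- The noise vectors of weight `w` that are at least as close to `c` as to the transmitted zero
word. -/
def confusableWith (w : ℕ) (c : Fin n → ZMod 2) : Finset (Fin n → ZMod 2) :=
  {η | wt η = w ∧ wt (η - c) ≤ w}

/-- The error event: the noise vectors at least as close to some word of `S` as to the transmitted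
zero word. Ties count as errors, so this is every vector if `0 ∈ S`. -/
def errorEvent (S : Finset (Fin n → ZMod 2)) : Finset (Fin n → ZMod 2) :=
  {η | ∃ c ∈ S, wt (η - c) ≤ wt η}

lemma card_confusableWith_eq_of_wt_eq (w : ℕ) {c d : Fin n → ZMod 2} (h : wt c = wt d) :
    #(confusableWith w c) = #(confusableWith w d) := by
  obtain ⟨σ, rfl⟩ := exists_comp_perm_eq_of_wt_eq h
  have wt_sub_comp (η : Fin n → ZMod 2) : wt (η ∘ σ - d ∘ σ) = wt (η - d) := wt_comp_perm (η - d) σ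
  refine (card_equiv (σ.symm.arrowCongr (Equiv.refl _)) fun η => ?_).symm
  change η ∈ confusableWith w d ↔ η ∘ σ ∈ confusableWith w (d ∘ σ)
  simp only [confusableWith, mem_filter_univ, wt_comp_perm, wt_sub_comp]

lemma sum_card_confusableWith (n w : ℕ) :
    ∑ c : Fin n → ZMod 2, #(confusableWith w c) = n.choose w * #(wtBall n w) := by
  have card_near (η : Fin n → ZMod 2) : #{c | wt (η - c) ≤ w} = #(wtBall n w) :=
    card_equiv (Equiv.subLeft η) fun c => by simp [wtBall]
  calc ∑ c : Fin n → ZMod 2, #(confusableWith w c)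
      = ∑ c : Fin n → ZMod 2, #{η ∈ {η | wt η = w} | wt (η - c) ≤ w} := by
        simp only [confusableWith, filter_filter]
    _ = ∑ η : Fin n → ZMod 2 with wt η = w, #{c | wt (η - c) ≤ w} :=
        (sum_card_bipartiteAbove_eq_sum_card_bipartiteBelow fun η c => wt (η - c) ≤ w).symm
    _ = n.choose w * #(wtBall n w) := by
        simp only [card_near, sum_const, card_filter_wt_eq, smul_eq_mul]

lemma card_errorEvent_wt_eq_le (S : Finset (Fin n → ZMod 2)) (w : ℕ) :
    #{η ∈ errorEvent S | wt η = w} ≤ ∑ c ∈ S, #(confusableWith w c) := by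
  refine (card_le_card fun η hη => ?_).trans card_biUnion_le
  simp only [errorEvent, mem_filter, mem_univ, true_and] at hη
  obtain ⟨⟨c, hcS, hc⟩, rfl⟩ := hη
  exact mem_biUnion.mpr ⟨c, hcS, by simpa [confusableWith] using hc⟩

lemma card_errorEvent_wt_eq_le_mul {S : Finset (Fin n → ZMod 2)} {M : ℝ}
    (hS : ∀ i, (#{c ∈ S | wt c = i} : ℝ) ≤ M * n.choose i) (w : ℕ) :
    (#{η ∈ errorEvent S | wt η = w} : ℝ) ≤ n.choose w * (M * #(wtBall n w)) :=
  calc (#{η ∈ errorEvent S | wt η = w} : ℝ)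
      ≤ ∑ c ∈ S, (#(confusableWith w c) : ℝ) := mod_cast card_errorEvent_wt_eq_le S w
    _ ≤ M * ∑ c : Fin n → ZMod 2, (#(confusableWith w c) : ℝ) :=
        sum_le_mul_sum_of_card_fiber_le (g := wt) (fun _ => Nat.cast_nonneg _)
          (fun _ _ h => congrArg _ (card_confusableWith_eq_of_wt_eq w h))
          fun i => by simpa only [card_filter_wt_eq] using hS i
    _ = n.choose w * (M * #(wtBall n w)) := by
        rw [← Nat.cast_sum, sum_card_confusableWith]
        push_cast
        ring

end Confusion

section GallagerBound

variable {n : ℕ} {p : ℝ}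

lemma card_wtBall_mul_le_one (hp0 : 0 ≤ p) (hp : p ≤ 1 / 2) {w : ℕ} (hw : w ≤ n) :
    (#(wtBall n w) : ℝ) * (p ^ w * (1 - p) ^ (n - w)) ≤ 1 := by
  have hq : 0 ≤ 1 - p := by linarith
  calc (#(wtBall n w) : ℝ) * (p ^ w * (1 - p) ^ (n - w))
      = ∑ _x ∈ wtBall n w, p ^ w * (1 - p) ^ (n - w) := by rw [sum_const, nsmul_eq_mul]
    _ ≤ ∑ x ∈ wtBall n w, p ^ wt x * (1 - p) ^ (n - wt x) :=
        sum_le_sum fun x hx =>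
          pow_mul_pow_sub_le_of_le hp0 (by linarith) (mem_filter_univ x |>.mp hx) hw
    _ ≤ ∑ x : Fin n → ZMod 2, p ^ wt x * (1 - p) ^ (n - wt x) :=
        sum_le_univ_sum_of_nonneg fun x => by positivity
    _ = 1 := by rw [sum_pow_wt_mul_pow, add_sub_cancel, one_pow]

lemma bscProb_eq_sum_card_wt_eq (p : ℝ) (E : Finset (Fin n → ZMod 2)) :
    bscProb p E = ∑ w ∈ range (n + 1), #{η ∈ E | wt η = w} * (p ^ w * (1 - p) ^ (n - w)) := by
  have hmaps : ∀ η ∈ E, wt η ∈ range (n + 1) := fun η _ =>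
    mem_range_succ_iff.mpr (wt_le η)
  rw [bscProb, ← sum_fiberwise_of_maps_to' hmaps fun w => p ^ w * (1 - p) ^ (n - w)]
  simp only [sum_const, nsmul_eq_mul]

lemma card_errorEvent_wt_eq_le_rpow {S : Finset (Fin n → ZMod 2)} {M s : ℝ}
    (hS : ∀ i, (#{c ∈ S | wt c = i} : ℝ) ≤ M * n.choose i) (hs0 : 0 ≤ s) (hs1 : s ≤ 1) (w : ℕ) :
    (#{η ∈ errorEvent S | wt η = w} : ℝ) ≤ n.choose w * (M * #(wtBall n w)) ^ s := by
  have hM : 0 ≤ M := nonneg_of_card_wt_eq_le hS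
  have hall : (#{η ∈ errorEvent S | wt η = w} : ℝ) ≤ n.choose w := by
    rw [← card_filter_wt_eq]
    exact_mod_cast card_le_card (filter_subset_filter _ (subset_univ _))
  calc (#{η ∈ errorEvent S | wt η = w} : ℝ)
      ≤ min (n.choose w * (1 : ℝ)) (n.choose w * (M * #(wtBall n w))) :=
        le_min (hall.trans_eq (mul_one _).symm) (card_errorEvent_wt_eq_le_mul hS w)
    _ = n.choose w * min 1 (M * #(wtBall n w)) :=
        (mul_min_of_nonneg _ _ (Nat.cast_nonneg _)).symm
    _ ≤ n.choose w * (M * #(wtBall n w)) ^ s := by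
        gcongr
        exact min_one_le_rpow (by positivity) hs0 hs1

lemma bscProb_errorEvent_le {S : Finset (Fin n → ZMod 2)} {M s : ℝ} (hp0 : 0 < p)
    (hp : p ≤ 1 / 2) (hS : ∀ i, (#{c ∈ S | wt c = i} : ℝ) ≤ M * n.choose i)
    (hs0 : 0 ≤ s) (hs1 : s ≤ 1) :
    bscProb p (errorEvent S) ≤ M ^ s * (p ^ (1 - s) + (1 - p) ^ (1 - s)) ^ n := by
  have hq0 : 0 < 1 - p := by linarith
  have hM : 0 ≤ M := nonneg_of_card_wt_eq_le hS
  rw [bscProb_eq_sum_card_wt_eq, add_pow, mul_sum]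
  refine sum_le_sum fun w hw => ?_
  have hball := card_wtBall_mul_le_one hp0.le hp (mem_range_succ_iff.mp hw)
  set b : ℝ := (#(wtBall n w) : ℝ)
  set P := p ^ w * (1 - p) ^ (n - w) with hP
  have hP_rpow : P ^ (1 - s) = (p ^ (1 - s)) ^ w * ((1 - p) ^ (1 - s)) ^ (n - w) := by
    rw [hP, Real.mul_rpow (by positivity) (by positivity), Real.rpow_pow_comm hp0.le,
      Real.rpow_pow_comm hq0.le]
  calc #{η ∈ errorEvent S | wt η = w} * P
      ≤ n.choose w * (M * b) ^ s * P := by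
        gcongr
        exact card_errorEvent_wt_eq_le_rpow hS hs0 hs1 w
    _ = n.choose w * M ^ s * (b ^ s * P) := by
        rw [Real.mul_rpow hM (by positivity)]
        ring
    _ ≤ n.choose w * M ^ s * P ^ (1 - s) := by
        gcongr
        exact rpow_mul_le_of_mul_le_one (by positivity) (by positivity) hball hs0
    _ = M ^ s * ((p ^ (1 - s)) ^ w * ((1 - p) ^ (1 - s)) ^ (n - w) * n.choose w) := by
        rw [hP_rpow]
        ring

end GallagerBound

section Exponent

variable {p ρ : ℝ}

/-- The base of Gallager's exponential bound with parameter `s`: its `n`-th power bounds the error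
probability of a code of length `n` whose weight distribution is at most `2 ^ (-ρ * n)` times that
of the whole space. -/
noncomputable def gallagerBase (p ρ s : ℝ) : ℝ :=
  2 ^ (-ρ * s) * (p ^ (1 - s) + (1 - p) ^ (1 - s))

lemma gallagerBase_pos (hp0 : 0 < p) (hp1 : p < 1) (ρ s : ℝ) : 0 < gallagerBase p ρ s :=
  mul_pos (Real.rpow_pos_of_pos two_pos _)
    (add_pos (Real.rpow_pos_of_pos hp0 _) (Real.rpow_pos_of_pos (sub_pos.mpr hp1) _))

lemma hasDerivAt_gallagerBase (hp0 : 0 < p) (hp1 : p < 1) (ρ : ℝ) :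
    HasDerivAt (gallagerBase p ρ) ((binH p - ρ) * Real.log 2) 0 := by
  have hlin : HasDerivAt (fun s : ℝ => -ρ * s) (-ρ) 0 := by
    simpa using (hasDerivAt_id (0 : ℝ)).const_mul (-ρ)
  have hsub : HasDerivAt (fun s : ℝ => 1 - s) (-1) 0 := by
    simpa using (hasDerivAt_id (0 : ℝ)).const_sub 1
  refine ((hlin.const_rpow two_pos).mul
    ((hsub.const_rpow hp0).add (hsub.const_rpow (sub_pos.mpr hp1)))).congr_deriv ?_
  have hlog2 : Real.log 2 ≠ 0 := (Real.log_pos one_lt_two).ne'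
  simp only [binH, Real.logb, Pi.add_apply, mul_zero, sub_zero, Real.rpow_zero, Real.rpow_one]
  field_simp
  ring

lemma exists_gallagerBase_lt_one (hp0 : 0 < p) (hp1 : p < 1) (hρ : binH p < ρ) :
    ∃ s ∈ Set.Ioo (0 : ℝ) 1, gallagerBase p ρ s < 1 := by
  have hneg : (binH p - ρ) * Real.log 2 < 0 :=
    mul_neg_of_neg_of_pos (sub_neg.mpr hρ) (Real.log_pos one_lt_two)
  simpa [gallagerBase] using
    exists_mem_Ioo_lt_of_hasDerivAt_neg (hasDerivAt_gallagerBase hp0 hp1 ρ) hneg one_pos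

theorem exists_bscProb_errorEvent_le_rpow (hp0 : 0 < p) (hp : p ≤ 1 / 2) (hρ : binH p < ρ) :
    ∃ α : ℝ, 0 < α ∧ ∀ (n : ℕ) (S : Finset (Fin n → ZMod 2)),
      (∀ i, (#{c ∈ S | wt c = i} : ℝ) ≤ 2 ^ (-ρ * n) * n.choose i) →
        bscProb p (errorEvent S) ≤ 2 ^ (-α * n) := by
  obtain ⟨s, ⟨hs0, hs1⟩, hbase⟩ := exists_gallagerBase_lt_one hp0 (by linarith) hρ
  have hpos := gallagerBase_pos hp0 (by linarith) ρ s
  refine ⟨-Real.logb 2 (gallagerBase p ρ s), neg_pos.mpr (Real.logb_neg one_lt_two hpos hbase),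
    fun n S hS => ?_⟩
  calc bscProb p (errorEvent S)
      ≤ ((2 : ℝ) ^ (-ρ * n)) ^ s * (p ^ (1 - s) + (1 - p) ^ (1 - s)) ^ n :=
        bscProb_errorEvent_le hp0 hp hS hs0.le hs1.le
    _ = gallagerBase p ρ s ^ n := by
        rw [gallagerBase, mul_pow, ← Real.rpow_mul_natCast two_pos.le, ← Real.rpow_mul two_pos.le,
          mul_right_comm]
    _ = 2 ^ (- -Real.logb 2 (gallagerBase p ρ s) * n) := by
        rw [neg_neg, Real.rpow_mul_natCast two_pos.le,
          Real.rpow_logb two_pos (by norm_num) hpos]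

end Exponent

open scoped Classical in
theorem stmt14_general {p δ θ : ℝ} (τ : ℝ) (hp0 : 0 < p) (hp : p ≤ 1 / 2) (hθ : θ < δ) :
    ∃ α : ℝ, 0 < α ∧ ∀ (n : ℕ) (k : ℝ), 1 ≤ n → ∀ C : Set (Fin n → ZMod 2),
      k / n < 1 - binH p - δ →
      (∀ i : ℕ, τ * n ≤ i →
        (#{c | c ∈ C ∧ wt c = i} : ℝ) ≤ 2 ^ (θ * n) * n.choose i * 2 ^ (k - n)) →
      bscProb p {η | ∃ c ∈ C, τ * n ≤ wt c ∧ wt (η - c) ≤ wt η} ≤ 2 ^ (-α * n) := by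
  have hρ : binH p < binH p + δ - θ := by linarith
  obtain ⟨α, hα, hbound⟩ := exists_bscProb_errorEvent_le_rpow hp0 hp hρ
  refine ⟨α, hα, fun n k hn C hk hC => ?_⟩
  have hk' : k ≤ (1 - binH p - δ) * n := ((div_lt_iff₀ (by positivity)).mp hk).le
  let S : Finset (Fin n → ZMod 2) := {c | c ∈ C ∧ τ * n ≤ wt c}
  have herror : ({η | ∃ c ∈ C, τ * n ≤ wt c ∧ wt (η - c) ≤ wt η} : Finset (Fin n → ZMod 2)) =
      errorEvent S := by
    simp [errorEvent, S, and_assoc]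
  rw [herror]
  refine hbound n S fun i => ?_
  rcases le_or_gt (τ * n) i with hi | hi
  · calc (#{c ∈ S | wt c = i} : ℝ)
        ≤ #{c | c ∈ C ∧ wt c = i} := by
          gcongr
          intro c hc
          simp only [S, mem_filter, mem_univ, true_and] at hc ⊢
          exact ⟨hc.1.1, hc.2⟩
      _ ≤ 2 ^ (θ * n + (k - n)) * n.choose i := by
          rw [Real.rpow_add two_pos, mul_right_comm]
          exact hC i hi
      _ ≤ 2 ^ (-(binH p + δ - θ) * n) * n.choose i := by
          gcongr
          · exact one_le_two
          · linarith
  · have hempty : #{c ∈ S | wt c = i} = 0 := by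
      simp only [S, card_eq_zero, filter_eq_empty_iff, mem_filter, mem_univ, true_and]
      rintro c ⟨-, hc⟩ rfl
      exact hc.not_gt hi
    rw [hempty, Nat.cast_zero]
    positivity

open scoped Classical in
theorem stmt14 (p δ τ : ℝ) (hp0 : 0 < p) (hp1 : p < 1 / 2) (hδ : 0 < δ)
    (hτ0 : 0 ≤ τ) (hτ1 : τ ≤ 1) :
    ∃ α : ℝ, 0 < α ∧
      ∀ (n k : ℕ), 1 ≤ n →
        ∀ C : Submodule (ZMod 2) (Fin n → ZMod 2),
          (k : ℝ) / n < 1 - binH p - δ →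
          (∀ i : ℕ, τ * n ≤ (i : ℝ) →
            ((Finset.univ.filter fun c : Fin n → ZMod 2 => c ∈ C ∧ wt c = i).card : ℝ) ≤
              (2 : ℝ) ^ ((δ / 3) * n) * (n.choose i : ℝ) * (2 : ℝ) ^ ((k : ℤ) - (n : ℤ))) →
          bscProb p (Finset.univ.filter fun η : Fin n → ZMod 2 =>
              ∃ c ∈ C, τ * n ≤ (wt c : ℝ) ∧ wt (η - c) ≤ wt η) ≤
            (2 : ℝ) ^ (-α * n) := by
  obtain ⟨α, hα, h⟩ := stmt14_general τ hp0 hp1.le (by linarith : δ / 3 < δ)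
  exact ⟨α, hα, fun n k hn C hk hC => h n k hn C hk (by simpa [← Real.rpow_intCast] using hC)⟩
end
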